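/- In a complete metric tree, ε-covers and ε-nets have the same minimal cardinality: let T be a complete metric tree (complete geodesic metric space satisfying the four-point inequality), A ⊆ T, ε > 0 and n ∈ ℕ. Then A can be covered by n subsets of T each of diameter at most 2ε if and only if there exist n points t₁,…,tₙ ∈ T with A ⊆ ⋃ᵢ closedBall(tᵢ, ε). -/

import Mathlib

/-!
It suffices to show that a nonempty bounded set `U` of diameter `D` lies in a closed ball of
radius `D / 2`. Two consequences of the four-point inequality give this. First, if `x, y ∈ U` nearly
realise `D`, then `U` lies in a ball of radius slightly more than `D / 2` around the midpoint of `x`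
and `y`. Second, if `U` lies in balls of radii `r` and `s`, then the two centres are at distance at
most `r + s - D`. Hence centres of balls containing `U` whose radii decrease to `D / 2` form a
Cauchy sequence, and the limit is the required centre.
-/

open Filter Metric Topology

section Definitions

variable (T : Type*) [PseudoMetricSpace T]

/-- Every two points are joined by an isometrically embedded segment. The map `γ` is defined on all
of `ℝ`, but only its values on `[0, dist x y]` matter. -/
def IsGeodesicSpace : Prop :=
  ∀ x y : T, ∃ γ : ℝ → T, γ 0 = x ∧ γ (dist x y) = y ∧
    ∀ s ∈ Set.Icc (0 : ℝ) (dist x y), ∀ t ∈ Set.Icc (0 : ℝ) (dist x y),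
      dist (γ s) (γ t) = |s - t|

/-- Every two points have a metric midpoint; midpoints of nearly diametral pairs serve as
approximate centres of a set. -/
def HasMidpoints : Prop :=
  ∀ x y : T, ∃ m : T, dist m x = dist x y / 2 ∧ dist m y = dist x y / 2

/-- The four-point inequality, that is, Gromov's `0`-hyperbolicity; among geodesic metric spaces it
characterises the metric trees. -/
def FourPointInequality : Prop :=
  ∀ x₁ x₂ x₃ x₄ : T, dist x₁ x₂ + dist x₃ x₄ ≤
    max (dist x₁ x₃ + dist x₂ x₄) (dist x₁ x₄ + dist x₂ x₃)

end Definitions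

section Covers

variable {T : Type*} [PseudoMetricSpace T]

theorem IsGeodesicSpace.hasMidpoints (hgeo : IsGeodesicSpace T) : HasMidpoints T := by
  intro x y
  obtain ⟨γ, hγx, hγy, hγ⟩ := hgeo x y
  have hd : 0 ≤ dist x y := dist_nonneg
  have hhalf : dist x y / 2 ∈ Set.Icc 0 (dist x y) := ⟨div_nonneg hd zero_le_two, half_le_self hd⟩
  refine ⟨γ (dist x y / 2), ?_, ?_⟩
  · calc dist (γ (dist x y / 2)) x = |dist x y / 2 - 0| := by
          rw [← hγ _ hhalf 0 (Set.left_mem_Icc.mpr hd), hγx]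
      _ = dist x y / 2 := by rw [sub_zero, abs_of_nonneg hhalf.1]
  · calc dist (γ (dist x y / 2)) y = |dist x y / 2 - dist x y| := by
          rw [← hγ _ hhalf _ (Set.right_mem_Icc.mpr hd), hγy]
      _ = dist x y / 2 := by rw [abs_sub_comm, sub_half, abs_of_nonneg hhalf.1]

namespace FourPointInequality

variable {U : Set T} {r s : ℝ}

theorem dist_le_add_sub_dist (hfour : FourPointInequality T) {c c' x y : T}
    (hcx : dist c x ≤ r) (hcy : dist c y ≤ r) (hcx' : dist c' x ≤ s) (hcy' : dist c' y ≤ s) :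
    dist c c' ≤ r + s - dist x y := by
  have hmax : max (dist c x + dist c' y) (dist c y + dist c' x) ≤ r + s :=
    max_le (add_le_add hcx hcy') (add_le_add hcy hcx')
  linarith [hfour c c' x y]

theorem dist_le_add_sub_diam (hfour : FourPointInequality T) (hne : U.Nonempty) {c c' : T}
    (hc : U ⊆ closedBall c r) (hc' : U ⊆ closedBall c' s) :
    dist c c' ≤ r + s - diam U := by
  suffices diam U ≤ r + s - dist c c' by linarith
  refine diam_le_of_forall_dist_le_of_nonempty hne fun x hx y hy => ?_
  linarith [hfour.dist_le_add_sub_dist (mem_closedBall'.mp (hc hx)) (mem_closedBall'.mp (hc hy))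
    (mem_closedBall'.mp (hc' hx)) (mem_closedBall'.mp (hc' hy))]

theorem exists_subset_closedBall_of_half_diam_lt (hfour : FourPointInequality T)
    (hmid : HasMidpoints T) (hne : U.Nonempty) (hbdd : Bornology.IsBounded U)
    (hr : diam U / 2 < r) : ∃ c, U ⊆ closedBall c r := by
  obtain ⟨x, hx, y, hy, hxy⟩ : ∃ x ∈ U, ∃ y ∈ U, 2 * (diam U - r) < dist x y := by
    by_contra! h
    linarith [diam_le_of_forall_dist_le_of_nonempty hne h]
  obtain ⟨m, hmx, hmy⟩ := hmid x y
  refine ⟨m, fun u hu => mem_closedBall.mpr ?_⟩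
  calc dist u m ≤ diam U + dist x y / 2 - dist x y :=
        hfour.dist_le_add_sub_dist (dist_le_diam_of_mem hbdd hu hx)
          (dist_le_diam_of_mem hbdd hu hy) hmx.le hmy.le
    _ ≤ r := by linarith

theorem exists_subset_closedBall_half_diam [CompleteSpace T] (hfour : FourPointInequality T)
    (hmid : HasMidpoints T) (hne : U.Nonempty) (hbdd : Bornology.IsBounded U) :
    ∃ c, U ⊆ closedBall c (diam U / 2) := by
  obtain ⟨δ, hδ_anti, hδ_pos, hδ_lim⟩ := exists_seq_strictAnti_tendsto (0 : ℝ)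
  choose c hc using fun k => hfour.exists_subset_closedBall_of_half_diam_lt hmid hne hbdd
    (lt_add_of_pos_right (diam U / 2) (hδ_pos k))
  have hcauchy : CauchySeq c := by
    refine cauchySeq_of_le_tendsto_0 (fun k => 2 * δ k) (fun i j k hi hj => ?_)
      (by simpa using hδ_lim.const_mul 2)
    linarith [hfour.dist_le_add_sub_diam hne (hc i) (hc j), hδ_anti.antitone hi,
      hδ_anti.antitone hj]
  obtain ⟨c₀, hc₀⟩ := cauchySeq_tendsto_of_complete hcauchy
  have hradius : Tendsto (fun k => diam U / 2 + δ k) atTop (𝓝 (diam U / 2)) := by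
    simpa using hδ_lim.const_add (diam U / 2)
  exact ⟨c₀, fun u hu => mem_closedBall.mpr <|
    le_of_tendsto_of_tendsto' (tendsto_const_nhds.dist hc₀) hradius fun k => hc k hu⟩

theorem exists_subset_closedBall_iff [CompleteSpace T] [Nonempty T]
    (hfour : FourPointInequality T) (hmid : HasMidpoints T) :
    (∃ c, U ⊆ closedBall c r) ↔ ∀ x ∈ U, ∀ y ∈ U, dist x y ≤ 2 * r := by
  constructor
  · rintro ⟨c, hc⟩ x hx y hy
    calc dist x y ≤ dist x c + dist y c := dist_triangle_right x y c
      _ ≤ r + r := add_le_add (hc hx) (hc hy)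
      _ = 2 * r := (two_mul r).symm
  · intro hU
    rcases U.eq_empty_or_nonempty with rfl | hne
    · exact ⟨Classical.arbitrary T, Set.empty_subset _⟩
    have hbdd : Bornology.IsBounded U :=
      isBounded_iff.mpr ⟨2 * r, fun x hx y hy => hU x hx y hy⟩
    obtain ⟨c, hc⟩ := hfour.exists_subset_closedBall_half_diam hmid hne hbdd
    have hdiam : diam U ≤ 2 * r := diam_le_of_forall_dist_le_of_nonempty hne hU
    exact ⟨c, hc.trans (closedBall_subset_closedBall (by linarith))⟩

end FourPointInequality

theorem cover_iff_net_general [CompleteSpace T] [Nonempty T] {ι : Sort*}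
    (hmid : HasMidpoints T) (hfour : FourPointInequality T) (A : Set T) (ε : ℝ) :
    (∃ U : ι → Set T, (∀ i, ∀ x ∈ U i, ∀ y ∈ U i, dist x y ≤ 2 * ε) ∧ A ⊆ ⋃ i, U i) ↔
      ∃ t : ι → T, A ⊆ ⋃ i, closedBall (t i) ε := by
  simp only [← hfour.exists_subset_closedBall_iff hmid]
  constructor
  · rintro ⟨U, hU, hA⟩
    choose t ht using hU
    exact ⟨t, hA.trans (Set.iUnion_mono ht)⟩
  · rintro ⟨t, hA⟩
    exact ⟨fun i => closedBall (t i) ε, fun i => ⟨t i, subset_rfl⟩, hA⟩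

end Covers

/-- In a complete metric tree (complete geodesic metric space
satisfying the four-point inequality), for every `A ⊆ T`, `ε > 0` and `n ∈ ℕ`: `A` can
be covered by `n` subsets of `T` of diameter at most `2ε` if and only if there are `n`
points of `T` whose closed `ε`-balls cover `A`. -/
theorem cover_iff_net {T : Type*} [MetricSpace T] [CompleteSpace T] [Nonempty T]
    (hgeo : ∀ x y : T, ∃ γ : ℝ → T, γ 0 = x ∧ γ (dist x y) = y ∧
      ∀ s ∈ Set.Icc (0 : ℝ) (dist x y), ∀ t ∈ Set.Icc (0 : ℝ) (dist x y),
        dist (γ s) (γ t) = |s - t|)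
    (hfour : ∀ x₁ x₂ x₃ x₄ : T, dist x₁ x₂ + dist x₃ x₄ ≤
      max (dist x₁ x₃ + dist x₂ x₄) (dist x₁ x₄ + dist x₂ x₃))
    (A : Set T) (ε : ℝ) (hε : 0 < ε) (n : ℕ) :
    (∃ U : Fin n → Set T, (∀ i, ∀ x ∈ U i, ∀ y ∈ U i, dist x y ≤ 2 * ε) ∧
        A ⊆ ⋃ i, U i) ↔
      (∃ t : Fin n → T, A ⊆ ⋃ i, Metric.closedBall (t i) ε) :=
  cover_iff_net_general (IsGeodesicSpace.hasMidpoints hgeo) hfour A ε
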